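/- For every α ∈ (−1, 1), the map w_α is continuous and strictly increasing on [−1, 1] and is a bijection from [−1, 1] onto [−1, 1]. -/

import Mathlib

/-!
The symmetry `v (2π - τ) = 1 - v τ` turns `w` into `2π • r ∘ v` with
`r x = x ^ p / (x ^ p + (1 - x) ^ p)`, whose denominator has no real zero. Both
`v : [0, 2π] → [0, 1]` and `r : [0, 1] → [0, 1]` are strictly increasing, hence so is `w` on
`[0, 2π]`, and `w 0 = 0`, `w π = π`.
As `w` vanishes at `0`, the jump of `sgn` is harmless: `w_α` is `α + (1 - α) / π * w (π τ)` on
the whole of `[0, ∞)`, and the reflection `w_α (-τ) = -w_{-α} τ` gives the other half-line.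
Bijectivity then comes from `w_α (±1) = ±1` and the intermediate value theorem.
-/

open Real

/-- The function `v` from equation (colt_kress_2), depending on an integer parameter `p`. -/
noncomputable def vCK (p : ℕ) (τ : ℝ) : ℝ :=
  (1 / (p : ℝ) - 1 / 2) * ((π - τ) / π) ^ 3 + (1 / (p : ℝ)) * ((τ - π) / π) + 1 / 2

/-- The Colton–Kress change of variables `w` from equation (colt_kress_1). -/
noncomputable def wCK (p : ℕ) (τ : ℝ) : ℝ :=
  2 * π * (vCK p τ) ^ p / ((vCK p τ) ^ p + (vCK p (2 * π - τ)) ^ p)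

/-- The rectangular-polar change of variables `w_α` for `α ∈ (−1, 1)`. -/
noncomputable def wRP (p : ℕ) (α : ℝ) (τ : ℝ) : ℝ :=
  α + ((Real.sign τ - α) / π) * wCK p (π * |τ|)

lemma pow_add_pow_ne_zero_of_add_ne_zero {R : Type*} [Ring R] [LinearOrder R]
    [IsStrictOrderedRing R] {x y : R} (h : x + y ≠ 0) (n : ℕ) : x ^ n + y ^ n ≠ 0 := by
  contrapose h with hsum
  rcases n.even_or_odd with hn | hn
  · obtain ⟨hx, hy⟩ := (add_eq_zero_iff_of_nonneg (hn.pow_nonneg x) (hn.pow_nonneg y)).1 hsum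
    rw [eq_zero_of_pow_eq_zero hx, eq_zero_of_pow_eq_zero hy, add_zero]
  · rw [add_eq_zero_iff_eq_neg, ← hn.neg_pow] at hsum
    exact add_eq_zero_iff_eq_neg.2 (hn.pow_injective hsum)

lemma div_add_lt_div_add_of_lt_of_lt {K : Type*} [Field K] [LinearOrder K] [IsStrictOrderedRing K]
    {a b c d : K} (ha : 0 ≤ a) (hd : 0 ≤ d) (hab : a < b) (hdc : d < c) :
    a / (a + c) < b / (b + d) := by
  have had : a * d < b * c := mul_lt_mul'' hab hdc ha hd
  rw [div_lt_div_iff₀ (by linarith) (by linarith)]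
  linarith

section PowRatio

variable {K : Type*} [Field K]

/-- The share of `x ^ n` in `x ^ n + (1 - x) ^ n`, the rational function that the Colton–Kress
change of variables applies to `vCK`. -/
def powRatio (n : ℕ) (x : K) : K :=
  x ^ n / (x ^ n + (1 - x) ^ n)

lemma powRatio_zero {n : ℕ} (hn : n ≠ 0) : powRatio n (0 : K) = 0 := by
  rw [powRatio, zero_pow hn, zero_div]

lemma powRatio_one_half [NeZero (2 : K)] (n : ℕ) : powRatio n (1 / 2 : K) = 1 / 2 := by
  have hpow : (1 / 2 : K) ^ n ≠ 0 := pow_ne_zero n (one_div_ne_zero two_ne_zero)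
  rw [powRatio, sub_half, ← two_mul, div_mul_cancel_right₀ hpow, one_div]

variable [LinearOrder K] [IsStrictOrderedRing K]

lemma continuous_powRatio [TopologicalSpace K] [IsTopologicalDivisionRing K] (n : ℕ) :
    Continuous (powRatio n : K → K) := by
  have hden (x : K) : x ^ n + (1 - x) ^ n ≠ 0 :=
    pow_add_pow_ne_zero_of_add_ne_zero (by rw [add_sub_cancel]; exact one_ne_zero) n
  exact Continuous.div (by fun_prop) (by fun_prop) hden

lemma strictMonoOn_powRatio {n : ℕ} (hn : n ≠ 0) :
    StrictMonoOn (powRatio n : K → K) (Set.Icc 0 1) := by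
  intro x hx y hy hxy
  have hy' : 0 ≤ 1 - y := sub_nonneg.2 hy.2
  exact div_add_lt_div_add_of_lt_of_lt (pow_nonneg hx.1 n) (pow_nonneg hy' n)
    (pow_lt_pow_left₀ hxy hx.1 hn) (pow_lt_pow_left₀ (sub_lt_sub_left hxy 1) hy' hn)

end PowRatio

lemma vCK_two_pi_sub (p : ℕ) (τ : ℝ) : vCK p (2 * π - τ) = 1 - vCK p τ := by
  rw [vCK, vCK]
  ring

lemma vCK_zero (p : ℕ) : vCK p 0 = 0 := by
  rw [vCK, sub_zero, zero_sub, neg_div, div_self pi_ne_zero]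
  ring

lemma vCK_pi (p : ℕ) : vCK p π = 1 / 2 := by
  simp [vCK]

lemma vCK_two_pi (p : ℕ) : vCK p (2 * π) = 1 := by
  simpa [vCK_zero] using vCK_two_pi_sub p 0

lemma continuous_vCK (p : ℕ) : Continuous (vCK p) := by
  unfold vCK
  fun_prop

lemma strictMono_vCK {p : ℕ} (hp : 2 ≤ p) : StrictMono (vCK p) := by
  intro s t hst
  have hlin : (s - π) / π < (t - π) / π := by gcongr
  have hcube : ((π - t) / π) ^ 3 ≤ ((π - s) / π) ^ 3 :=
    (Odd.pow_le_pow (by decide)).2 (by gcongr)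
  have hslope : 0 < 1 / (p : ℝ) := by positivity
  have hcoeff : 1 / (p : ℝ) - 1 / 2 ≤ 0 :=
    sub_nonpos.2 (one_div_le_one_div_of_le two_pos (by exact_mod_cast hp))
  exact add_lt_add_left (add_lt_add_of_le_of_lt (mul_le_mul_of_nonpos_left hcube hcoeff)
    (mul_lt_mul_of_pos_left hlin hslope)) _

lemma mapsTo_vCK {p : ℕ} (hp : 2 ≤ p) :
    Set.MapsTo (vCK p) (Set.Icc 0 (2 * π)) (Set.Icc 0 1) := by
  simpa only [vCK_zero, vCK_two_pi] using
    (strictMono_vCK hp).monotone.mapsTo_Icc (a := 0) (b := 2 * π)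

lemma wCK_eq_powRatio (p : ℕ) (τ : ℝ) : wCK p τ = 2 * π * powRatio p (vCK p τ) := by
  rw [wCK, vCK_two_pi_sub, powRatio, mul_div_assoc]

lemma wCK_zero {p : ℕ} (hp : p ≠ 0) : wCK p 0 = 0 := by
  rw [wCK_eq_powRatio, vCK_zero, powRatio_zero hp, mul_zero]

lemma wCK_pi (p : ℕ) : wCK p π = π := by
  rw [wCK_eq_powRatio, vCK_pi, powRatio_one_half]
  ring

lemma continuous_wCK (p : ℕ) : Continuous (wCK p) := by
  rw [funext (wCK_eq_powRatio p)]
  exact continuous_const.mul ((continuous_powRatio p).comp (continuous_vCK p))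

lemma strictMonoOn_wCK {p : ℕ} (hp : 2 ≤ p) : StrictMonoOn (wCK p) (Set.Icc 0 (2 * π)) := by
  intro s hs t ht hst
  rw [wCK_eq_powRatio, wCK_eq_powRatio]
  exact mul_lt_mul_of_pos_left (strictMonoOn_powRatio (by lia) (mapsTo_vCK hp hs)
    (mapsTo_vCK hp ht) (strictMono_vCK hp hst)) two_pi_pos

lemma wRP_neg (p : ℕ) (α τ : ℝ) : wRP p α (-τ) = -wRP p (-α) τ := by
  rw [wRP, wRP, Real.sign_neg, abs_neg]
  ring

lemma wRP_of_nonneg {p : ℕ} (hp : p ≠ 0) (α : ℝ) {τ : ℝ} (hτ : 0 ≤ τ) :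
    wRP p α τ = α + (1 - α) / π * wCK p (π * τ) := by
  rcases hτ.eq_or_lt with rfl | hτ
  · simp only [wRP, abs_zero, mul_zero, wCK_zero hp]
  · rw [wRP, Real.sign_of_pos hτ, abs_of_pos hτ]

lemma wRP_one {p : ℕ} (hp : p ≠ 0) (α : ℝ) : wRP p α 1 = 1 := by
  rw [wRP_of_nonneg hp α zero_le_one, mul_one, wCK_pi, div_mul_cancel₀ _ pi_ne_zero,
    add_sub_cancel]

lemma wRP_neg_one {p : ℕ} (hp : p ≠ 0) (α : ℝ) : wRP p α (-1) = -1 := by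
  rw [wRP_neg, wRP_one hp]

lemma continuousOn_wRP_Ici {p : ℕ} (hp : p ≠ 0) (α : ℝ) :
    ContinuousOn (wRP p α) (Set.Ici 0) := by
  have hw := continuous_wCK p
  have hformula : Continuous fun τ => α + (1 - α) / π * wCK p (π * τ) := by fun_prop
  exact hformula.continuousOn.congr fun _ hτ => wRP_of_nonneg hp α hτ

lemma continuousOn_wRP_Iic {p : ℕ} (hp : p ≠ 0) (α : ℝ) :
    ContinuousOn (wRP p α) (Set.Iic 0) := by
  have hmaps : Set.MapsTo Neg.neg (Set.Iic (0 : ℝ)) (Set.Ici 0) := fun τ hτ => by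
    simpa using hτ
  have hreflect : ContinuousOn (fun τ => -wRP p (-α) (-τ)) (Set.Iic 0) :=
    ((continuousOn_wRP_Ici hp (-α)).comp continuousOn_neg hmaps).neg
  exact hreflect.congr fun τ _ => by
    simp only [← wRP_neg, neg_neg]

lemma continuous_wRP {p : ℕ} (hp : p ≠ 0) (α : ℝ) : Continuous (wRP p α) := by
  rw [← continuousOn_univ, ← Set.Iic_union_Ici (a := (0 : ℝ))]
  exact (continuousOn_wRP_Iic hp α).union_of_isClosed (continuousOn_wRP_Ici hp α)
    isClosed_Iic isClosed_Ici

lemma strictMonoOn_wRP_Icc_zero_two {p : ℕ} (hp : 2 ≤ p) {α : ℝ} (hα : α < 1) :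
    StrictMonoOn (wRP p α) (Set.Icc 0 2) := by
  intro s hs t ht hst
  have hmaps {τ : ℝ} (hτ : τ ∈ Set.Icc 0 2) : π * τ ∈ Set.Icc 0 (2 * π) :=
    ⟨mul_nonneg pi_nonneg hτ.1, by rw [mul_comm]; gcongr; exact hτ.2⟩
  have hw : wCK p (π * s) < wCK p (π * t) :=
    strictMonoOn_wCK hp (hmaps hs) (hmaps ht) (mul_lt_mul_of_pos_left hst pi_pos)
  have hslope : 0 < (1 - α) / π := div_pos (sub_pos.2 hα) pi_pos
  rw [wRP_of_nonneg (by lia) α hs.1, wRP_of_nonneg (by lia) α ht.1]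
  exact add_lt_add_right (mul_lt_mul_of_pos_left hw hslope) α

lemma strictMonoOn_wRP_Icc_neg_two_zero {p : ℕ} (hp : 2 ≤ p) {α : ℝ} (hα : -1 < α) :
    StrictMonoOn (wRP p α) (Set.Icc (-2) 0) := by
  intro s hs t ht hst
  have hmaps {τ : ℝ} (hτ : τ ∈ Set.Icc (-2) 0) : -τ ∈ Set.Icc 0 2 :=
    ⟨neg_nonneg.2 hτ.2, neg_le.1 hτ.1⟩
  have hreflect : wRP p (-α) (-t) < wRP p (-α) (-s) :=
    strictMonoOn_wRP_Icc_zero_two hp (neg_lt.1 hα) (hmaps ht) (hmaps hs) (neg_lt_neg hst)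
  rwa [wRP_neg, wRP_neg, neg_neg, neg_lt_neg_iff] at hreflect

lemma strictMonoOn_wRP {p : ℕ} (hp : 2 ≤ p) {α : ℝ} (hα : α ∈ Set.Ioo (-1) 1) :
    StrictMonoOn (wRP p α) (Set.Icc (-2) 2) := by
  have hneg : (-2 : ℝ) ≤ 0 := by norm_num
  rw [← Set.Icc_union_Icc_eq_Icc hneg zero_le_two]
  exact (strictMonoOn_wRP_Icc_neg_two_zero hp hα.1).union
    (strictMonoOn_wRP_Icc_zero_two hp hα.2) (isGreatest_Icc hneg) (isLeast_Icc zero_le_two)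

theorem wRP_continuous_strictMono_bijective (p : ℕ) (hp : 2 ≤ p)
    (α : ℝ) (hα : α ∈ Set.Ioo (-1 : ℝ) 1) :
    ContinuousOn (wRP p α) (Set.Icc (-1) 1) ∧
    StrictMonoOn (wRP p α) (Set.Icc (-1) 1) ∧
    Set.BijOn (wRP p α) (Set.Icc (-1) 1) (Set.Icc (-1) 1) := by
  have hp₀ : p ≠ 0 := by lia
  have hcont : ContinuousOn (wRP p α) (Set.Icc (-1) 1) := (continuous_wRP hp₀ α).continuousOn
  have hmono : StrictMonoOn (wRP p α) (Set.Icc (-1) 1) :=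
    (strictMonoOn_wRP hp hα).mono (Set.Icc_subset_Icc (by norm_num) (by norm_num))
  refine ⟨hcont, hmono, ?_⟩
  have himage : wRP p α '' Set.Icc (-1) 1 = Set.Icc (-1) 1 := by
    rw [hcont.image_Icc_of_monotoneOn (by norm_num) hmono.monotoneOn, wRP_neg_one hp₀, wRP_one hp₀]
  simpa only [himage] using hmono.injOn.bijOn_image
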